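/- Let X be a finite dimensional Banach space over 𝕂, 𝒮 = (S_n)_{n∈ℤ} a sequence of invertible linear operators on X with sup_{n∈ℤ} max{‖S_n‖, ‖S_n⁻¹‖} < ∞, 𝓔 a basis of X with 𝒮-bounded projections, and 1 ≤ p < ∞. Then the shift operator σ_𝒮 : ℓ_p(X) → ℓ_p(X) has the shadowing property if and only if the weighted backward shift B_{ω(x)} : ℓ_p(𝕂) → ℓ_p(𝕂) has the shadowing property for every x ∈ 𝓔. -/

import Mathlib

/-!
The operator `σ` is conjugate to the direct sum of the weighted shifts `B i`. Pushing `b i` along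
the (inverse) cocycle gives unit vectors `eVec S (b i) n` with
`S (n + 1) (eVec S (b i) (n + 1)) = wt S (b i) (n + 1) • eVec S (b i) n`. These vectors form a basis
of `X` for each `n`, and the bounded projections hypothesis says that the coordinate functionals of
these bases are bounded uniformly in `n`. Taking coordinates at each place therefore gives bounded
operators `P i : ℓ_p(X) → ℓ_p(𝕂)`, and synthesis gives bounded operators `J i : ℓ_p(𝕂) → ℓ_p(X)`,
such that `P i ∘ J i = id`, `∑ i, J i ∘ P i = id`, `P i ∘ σ = B i ∘ P i` and `σ ∘ J i = J i ∘ B i`.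

Shadowing passes to a factor through a bounded semiconjugacy with a bounded right inverse
(`Shadowing.factor`; the section need not be equivariant), and it passes to finite products
(`shadowing_pi`). The forward implication is the first fact applied to `P i`, with section `J i`;
the converse is the first fact applied to `(a_i) ↦ ∑ i, J i a_i` on `∏ i, ℓ_p(𝕂)`, with section
`(P i)`.
-/

open scoped ENNReal

namespace ShiftOperators

variable {𝕂 : Type*} [RCLike 𝕂] {X : Type*} [NormedAddCommGroup X] [NormedSpace 𝕂 X]

/-- `backComp S n x = (S_{[1,n]})⁻¹ x = Sₙ⁻¹ (⋯ (S₁⁻¹ x))`, with the convention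
`S_{[1,0]} = Id` (empty composition). -/
def backComp (S : ℤ → X ≃L[𝕂] X) : ℕ → X → X
  | 0, x => x
  | n + 1, x => (S ((n : ℤ) + 1)).symm (backComp S n x)

/-- `fwdComp S n x = S_{[-n+1,0]} x = S_{-n+1} (⋯ (S₀ x))`, with the convention
`fwdComp S 0 x = x` (empty composition). -/
def fwdComp (S : ℤ → X ≃L[𝕂] X) : ℕ → X → X
  | 0, x => x
  | n + 1, x => S (-(n : ℤ)) (fwdComp S n x)

/-- The unit vectors `e_n(x)` associated to a sequence of operators `S` and a vector `x`:
`e_n(x) = (S_{[1,n]})⁻¹ x / ‖(S_{[1,n]})⁻¹ x‖` for `n ≥ 0` and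
`e_n(x) = S_{[n+1,0]} x / ‖S_{[n+1,0]} x‖` for `n < 0`. -/
noncomputable def eVec (S : ℤ → X ≃L[𝕂] X) (x : X) (n : ℤ) : X :=
  if 0 ≤ n then ((‖backComp S n.toNat x‖ : ℝ) : 𝕂)⁻¹ • backComp S n.toNat x
  else ((‖fwdComp S (-n).toNat x‖ : ℝ) : 𝕂)⁻¹ • fwdComp S (-n).toNat x

/-- The weights `ω_n(x)`: `ω_n(x) = ‖(S_{[1,n-1]})⁻¹ x‖ / ‖(S_{[1,n]})⁻¹ x‖` for `n > 0`
and `ω_n(x) = ‖S_{[n,0]} x‖ / ‖S_{[n+1,0]} x‖` for `n ≤ 0`. -/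
noncomputable def wt (S : ℤ → X ≃L[𝕂] X) (x : X) (n : ℤ) : ℝ :=
  if 0 < n then ‖backComp S (n - 1).toNat x‖ / ‖backComp S n.toNat x‖
  else ‖fwdComp S (1 - n).toNat x‖ / ‖fwdComp S (-n).toNat x‖

/-- `sup_{n ∈ ℤ} max {‖Sₙ‖, ‖Sₙ⁻¹‖} < ∞`. -/
def UnifBounded (S : ℤ → X ≃L[𝕂] X) : Prop :=
  ∃ C : ℝ, ∀ n : ℤ, ‖(S n : X →L[𝕂] X)‖ ≤ C ∧ ‖((S n).symm : X →L[𝕂] X)‖ ≤ C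

/-- A map is topologically transitive. -/
def TopolTransitive {Y : Type*} [TopologicalSpace Y] (T : Y → Y) : Prop :=
  ∀ U V : Set Y, IsOpen U → IsOpen V → U.Nonempty → V.Nonempty →
    ∃ n : ℕ, (T^[n] '' U ∩ V).Nonempty

/-- A map is (topologically) mixing. -/
def TopolMixing {Y : Type*} [TopologicalSpace Y] (T : Y → Y) : Prop :=
  ∀ U V : Set Y, IsOpen U → IsOpen V → U.Nonempty → V.Nonempty →
    ∃ N : ℕ, ∀ n ≥ N, (T^[n] '' U ∩ V).Nonempty

/-- A map has the (linear) shadowing property with constant `K`: every bounded sequence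
`(z_n)` admits a bounded sequence `(x_n)` with `x_{n+1} - T x_n = z_n` and
`sup ‖x_n‖ ≤ K sup ‖z_n‖`. -/
def ShadowingWith {Y : Type*} [NormedAddCommGroup Y] (T : Y → Y) (K : ℝ) : Prop :=
  ∀ z : ℤ → Y, BddAbove (Set.range fun n => ‖z n‖) →
    ∃ x : ℤ → Y, BddAbove (Set.range fun n => ‖x n‖) ∧
      (∀ n : ℤ, x (n + 1) - T (x n) = z n) ∧
      (⨆ n : ℤ, ‖x n‖) ≤ K * ⨆ n : ℤ, ‖z n‖

/-- A map has the (linear) shadowing property. -/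
def Shadowing {Y : Type*} [NormedAddCommGroup Y] (T : Y → Y) : Prop :=
  ∃ K > 0, ShadowingWith T K

/-- A bounded invertible operator is generalized hyperbolic: `Y = M ⊕ N` for closed
subspaces with `T M ⊆ M`, `T⁻¹ N ⊆ N`, `T` uniformly contracting on `M` and `T⁻¹`
uniformly contracting on `N`. -/
def GeneralizedHyperbolic {Y : Type*} [NormedAddCommGroup Y] [NormedSpace 𝕂 Y]
    (T : Y ≃L[𝕂] Y) : Prop :=
  ∃ M N : Submodule 𝕂 Y, IsClosed (M : Set Y) ∧ IsClosed (N : Set Y) ∧ IsCompl M N ∧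
    (∀ u ∈ M, T u ∈ M) ∧ (∀ v ∈ N, T.symm v ∈ N) ∧
    ∃ C > 0, ∃ lam : ℝ, 0 < lam ∧ lam < 1 ∧
      (∀ u ∈ M, ∀ n : ℕ, ‖(⇑T)^[n] u‖ ≤ C * lam ^ n * ‖u‖) ∧
      (∀ v ∈ N, ∀ n : ℕ, ‖(⇑T.symm)^[n] v‖ ≤ C * lam ^ n * ‖v‖)

end ShiftOperators

namespace ShiftOperators

/-- Shadowing in a form free of suprema. -/
lemma shadowing_iff {Y : Type*} [NormedAddCommGroup Y] (T : Y → Y) :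
    Shadowing T ↔ ∃ K > 0, ∀ (z : ℤ → Y) (M : ℝ), (∀ n, ‖z n‖ ≤ M) →
      ∃ x : ℤ → Y, (∀ n, ‖x n‖ ≤ K * M) ∧ ∀ n, x (n + 1) - T (x n) = z n := by
  constructor
  · rintro ⟨K, hK, h⟩
    refine ⟨K, hK, fun z M hz => ?_⟩
    obtain ⟨x, hxb, hx, hle⟩ := h z ⟨M, by rintro _ ⟨n, rfl⟩; exact hz n⟩
    refine ⟨x, fun n => ?_, hx⟩
    calc ‖x n‖ ≤ ⨆ n, ‖x n‖ := le_ciSup hxb n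
      _ ≤ K * ⨆ n, ‖z n‖ := hle
      _ ≤ K * M := by gcongr; exact ciSup_le hz
  · rintro ⟨K, hK, h⟩
    refine ⟨K, hK, fun z hz => ?_⟩
    obtain ⟨x, hxb, hx⟩ := h z (⨆ n, ‖z n‖) (fun n => le_ciSup hz n)
    exact ⟨x, ⟨_, by rintro _ ⟨n, rfl⟩; exact hxb n⟩, hx, ciSup_le hxb⟩

/-- Shadowing passes to a factor along a bounded semiconjugacy `P` having a bounded right inverse
`J`; no equivariance of `J` is needed. -/
lemma Shadowing.factor {𝕂 Y Z : Type*} [NontriviallyNormedField 𝕂]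
    [NormedAddCommGroup Y] [NormedSpace 𝕂 Y] [NormedAddCommGroup Z] [NormedSpace 𝕂 Z]
    {T : Y → Y} {R : Z → Z} (hT : Shadowing T) (P : Y →L[𝕂] Z) (J : Z →L[𝕂] Y)
    (hPJ : ∀ a, P (J a) = a) (hPT : ∀ u, P (T u) = R (P u)) : Shadowing R := by
  rw [shadowing_iff] at hT ⊢
  obtain ⟨K, hK, h⟩ := hT
  refine ⟨(‖P‖ + 1) * (K * (‖J‖ + 1)), by positivity, fun z M hz => ?_⟩
  have hM : 0 ≤ M := (norm_nonneg _).trans (hz 0)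
  obtain ⟨x, hxb, hx⟩ := h (fun n => J (z n)) ((‖J‖ + 1) * M) fun n =>
    (J.le_opNorm _).trans (mul_le_mul (by linarith) (hz n) (norm_nonneg _) (by positivity))
  refine ⟨fun n => P (x n), fun n => ?_, fun n => ?_⟩
  · calc ‖P (x n)‖ ≤ ‖P‖ * ‖x n‖ := P.le_opNorm _
      _ ≤ (‖P‖ + 1) * (K * ((‖J‖ + 1) * M)) :=
        mul_le_mul (by linarith) (hxb n) (norm_nonneg _) (by positivity)
      _ = _ := by ring
  · rw [← hPT, ← map_sub, hx, hPJ]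

lemma shadowing_pi {ι : Type*} [Fintype ι] {Z : ι → Type*} [∀ i, NormedAddCommGroup (Z i)]
    {R : ∀ i, Z i → Z i} (h : ∀ i, Shadowing (R i)) :
    Shadowing (fun a : ∀ i, Z i => fun i => R i (a i)) := by
  simp only [shadowing_iff] at h ⊢
  choose K hK h using h
  have hsum : ∀ i, K i ≤ 1 + ∑ j, K j := fun i => by
    have := Finset.single_le_sum (fun j _ => (hK j).le) (Finset.mem_univ i)
    linarith
  have hpos : 0 < 1 + ∑ j, K j := by
    have := Finset.sum_nonneg (fun j (_ : j ∈ Finset.univ) => (hK j).le)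
    linarith
  refine ⟨1 + ∑ j, K j, hpos, fun z M hz => ?_⟩
  have hM : 0 ≤ M := (norm_nonneg _).trans (hz 0)
  choose x hxb hx using fun i => h i (fun n => z n i) M
    (fun n => (norm_le_pi_norm (z n) i).trans (hz n))
  refine ⟨fun n i => x i n, fun n => ?_, fun n => funext fun i => hx i n⟩
  exact (pi_norm_le_iff_of_nonneg (by positivity)).2 fun i =>
    (hxb i n).trans (by gcongr; exact hsum i)

section

variable {𝕂 : Type*} [RCLike 𝕂] {X : Type*} [NormedAddCommGroup X] [NormedSpace 𝕂 X]

/-- The orbit of `x` before normalization: `(S_{[1,n]})⁻¹ x` for `n ≥ 0` and `S_{[n+1,0]} x` for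
`n < 0`. -/
def orb (S : ℤ → X ≃L[𝕂] X) (x : X) (n : ℤ) : X :=
  if 0 ≤ n then backComp S n.toNat x else fwdComp S (-n).toNat x

lemma eVec_eq (S : ℤ → X ≃L[𝕂] X) (x : X) (n : ℤ) :
    eVec S x n = ((‖orb S x n‖ : ℝ) : 𝕂)⁻¹ • orb S x n := by
  unfold eVec orb
  split_ifs <;> rfl

lemma orb_of_nonpos (S : ℤ → X ≃L[𝕂] X) (x : X) (n : ℤ) (hn : n ≤ 0) :
    orb S x n = fwdComp S (-n).toNat x := by
  unfold orb
  split_ifs with h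
  · obtain rfl : n = 0 := le_antisymm hn h
    rfl
  · rfl

lemma wt_eq (S : ℤ → X ≃L[𝕂] X) (x : X) (n : ℤ) :
    wt S x (n + 1) = ‖orb S x n‖ / ‖orb S x (n + 1)‖ := by
  unfold wt
  split_ifs with h
  · rw [orb, orb, if_pos (by omega), if_pos (by omega), add_sub_cancel_right]
  · rw [orb_of_nonpos S x n (by omega), orb_of_nonpos S x (n + 1) (by omega)]
    congr 4
    omega

lemma map_orb (S : ℤ → X ≃L[𝕂] X) (x : X) (n : ℤ) :
    S (n + 1) (orb S x (n + 1)) = orb S x n := by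
  by_cases h : 0 ≤ n
  · rw [orb, orb, if_pos (by omega), if_pos h]
    lift n to ℕ using h
    rw [show ((n : ℤ) + 1).toNat = n + 1 by omega, Int.toNat_natCast, backComp,
      ContinuousLinearEquiv.apply_symm_apply]
  · rw [orb_of_nonpos S x n (by omega), orb_of_nonpos S x (n + 1) (by omega)]
    obtain ⟨m, rfl⟩ : ∃ m : ℕ, n = -(m : ℤ) - 1 := ⟨(-n - 1).toNat, by omega⟩
    rw [show (-(-(m : ℤ) - 1)).toNat = m + 1 by omega,
      show (-(-(m : ℤ) - 1 + 1)).toNat = m by omega, fwdComp,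
      show -(m : ℤ) - 1 + 1 = -m by ring]

/-- The operators move the unit vectors by the weights; this holds also for `x = 0`, where both
sides vanish. -/
lemma map_eVec (S : ℤ → X ≃L[𝕂] X) (x : X) (n : ℤ) :
    S (n + 1) (eVec S x (n + 1)) = ((wt S x (n + 1) : ℝ) : 𝕂) • eVec S x n := by
  rw [eVec_eq, eVec_eq, map_smul, map_orb, wt_eq, smul_smul]
  by_cases h : orb S x n = 0
  · simp [h]
  · have : ((‖orb S x n‖ : ℝ) : 𝕂) ≠ 0 := by simpa using h
    congr 1
    push_cast
    field_simp

lemma norm_eVec_le (S : ℤ → X ≃L[𝕂] X) (x : X) (n : ℤ) : ‖eVec S x n‖ ≤ 1 := by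
  rw [eVec_eq, norm_smul, norm_inv, RCLike.norm_ofReal, abs_norm]
  exact inv_mul_le_one

lemma norm_eVec (S : ℤ → X ≃L[𝕂] X) (x : X) (n : ℤ) (h : eVec S x n ≠ 0) :
    ‖eVec S x n‖ = 1 := by
  rw [eVec_eq] at h ⊢
  have h0 : ‖orb S x n‖ ≠ 0 := fun h0 => h (by rw [norm_eq_zero.1 h0, smul_zero])
  rw [norm_smul, norm_inv, RCLike.norm_ofReal, abs_norm, inv_mul_cancel₀ h0]

end

end ShiftOperators

open ShiftOperators

/-- If `𝓔` is a basis with `𝒮`-bounded projections of a finite dimensional Banach space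
`X`, then the shift operator `σ_𝒮 : ℓ_p(X) → ℓ_p(X)` has the shadowing property if and
only if the weighted backward shift `B_{ω(b i)}` has the shadowing property for every
`i`. -/
theorem shift_operator_shadowing_iff_weighted_shifts_shadowing
    {𝕂 : Type*} [RCLike 𝕂] {X : Type*} [NormedAddCommGroup X] [NormedSpace 𝕂 X]
    [CompleteSpace X] {d : ℕ}
    (S : ℤ → X ≃L[𝕂] X) (hS : UnifBounded S)
    (b : Fin d → X) (hbli : LinearIndependent 𝕂 b)
    (hbsp : Submodule.span 𝕂 (Set.range b) = ⊤)
    (hEli : ∀ n : ℤ, LinearIndependent 𝕂 (fun i => eVec S (b i) n))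
    (hEsp : ∀ n : ℤ, Submodule.span 𝕂 (Set.range fun i => eVec S (b i) n) = ⊤)
    (hproj : ∃ C : ℝ, ∀ (n : ℤ) (α : Fin d → 𝕂) (i : Fin d),
      ‖α i • eVec S (b i) n‖ ≤ C * ‖∑ j, α j • eVec S (b j) n‖)
    (p : ℝ≥0∞) [Fact (1 ≤ p)] (hp : p ≠ ∞)
    (σ : lp (fun _ : ℤ => X) p ≃L[𝕂] lp (fun _ : ℤ => X) p)
    (hσ : ∀ (u : lp (fun _ : ℤ => X) p) (n : ℤ), σ u n = S (n + 1) (u (n + 1)))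
    (B : Fin d → (lp (fun _ : ℤ => 𝕂) p ≃L[𝕂] lp (fun _ : ℤ => 𝕂) p))
    (hB : ∀ (i : Fin d) (a : lp (fun _ : ℤ => 𝕂) p) (n : ℤ),
      B i a n = ((wt S (b i) (n + 1) : ℝ) : 𝕂) * a (n + 1)) :
    Shadowing ⇑σ ↔ ∀ i : Fin d, Shadowing ⇑(B i) := by
  classical
  obtain ⟨C, hC⟩ := hproj
  let β : ∀ n : ℤ, Module.Basis (Fin d) 𝕂 X := fun n => Module.Basis.mk (hEli n) (hEsp n).ge
  have hβ : ∀ n i, β n i = eVec S (b i) n := fun n i => Module.Basis.mk_apply _ _ _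
  have hsum : ∀ n v, ∑ j, (β n).coord j v • eVec S (b j) n = v := fun n v => by
    simpa [hβ] using (β n).sum_repr v
  have hcoord : ∀ n i j, (β n).coord i (eVec S (b j) n) = if j = i then 1 else 0 := fun n i j => by
    rw [← hβ, Module.Basis.coord_apply, Module.Basis.repr_self, Finsupp.single_apply]
  have hbound : ∀ i n v, ‖(β n).coord i v‖ ≤ max C 0 * ‖v‖ := fun i n v => by
    have h := hC n (fun j => (β n).coord j v) i
    rw [hsum, norm_smul, norm_eVec S (b i) n ((hEli n).ne_zero i), mul_one] at h
    exact h.trans (by gcongr; exact le_max_left _ _)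
  let P : Fin d → lp (fun _ : ℤ => X) p →L[𝕂] lp (fun _ : ℤ => 𝕂) p := fun i =>
    lp.mapCLM p (fun n => ((β n).coord i).mkContinuous (max C 0) (hbound i n))
      (le_max_right C 0) fun n => LinearMap.mkContinuous_norm_le _ (le_max_right C 0) _
  let J : Fin d → lp (fun _ : ℤ => 𝕂) p →L[𝕂] lp (fun _ : ℤ => X) p := fun i =>
    lp.mapCLM p (fun n => ContinuousLinearMap.toSpanSingleton 𝕂 (eVec S (b i) n))
      zero_le_one fun n => by
        rw [ContinuousLinearMap.norm_toSpanSingleton]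
        exact norm_eVec_le S (b i) n
  have hP : ∀ i u n, P i u n = (β n).coord i (u n) := fun _ _ _ => rfl
  have hJ : ∀ i a n, J i a n = a n • eVec S (b i) n := fun _ _ _ => rfl
  have hPJ : ∀ i a, P i (J i a) = a := fun i a => by
    ext n
    rw [hP, hJ, map_smul, hcoord, if_pos rfl, smul_eq_mul, mul_one]
  have hJP : ∀ u, ∑ i, J i (P i u) = u := fun u => by
    ext n
    rw [lp.coeFn_sum, Finset.sum_apply]
    simp only [hJ, hP]
    exact hsum n (u n)
  have hσJ : ∀ i a, σ (J i a) = J i (B i a) := fun i a => by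
    ext n
    rw [hσ, hJ, hJ, hB, map_smul, map_eVec, smul_smul, mul_comm]
  have hPσ : ∀ i u, P i (σ u) = B i (P i u) := fun i u => by
    ext n
    rw [hP, hσ, hB, hP, ← hsum (n + 1) (u (n + 1))]
    simp only [map_sum, map_smul, map_eVec, hcoord, smul_eq_mul]
    simp [mul_comm]
  constructor
  · exact fun h i => h.factor (P i) (J i) (hPJ i) (hPσ i)
  · intro h
    refine (shadowing_pi h).factor (∑ i, (J i).comp (ContinuousLinearMap.proj i))
      (ContinuousLinearMap.pi P) (fun u => ?_) fun a => ?_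
    · simpa using hJP u
    · simp [hσJ]
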